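/- arXiv:1706.07865 — 2 statements merged into one kernel-verified Lean document; each statement's English description precedes it below -/
import Mathlib

section
/- For every natural number k ≥ 0, the number of initial consecutive odd entries in row k of Pascal's triangle equals 2^{t(k)}, where t(k) is the number of trailing 1-digits in the binary expansion of k. That is, the least index i ≥ 0 such that C(k,i) is even equals 2^{t(k)} whenever such an i ≤ k exists, and row k consists entirely of odd entries (i.e. k = 2^{t(k)} − 1) otherwise. -/
open Finset

/-- `nu k` is the number of trailing 1-digits in the binary expansion of `k`. -/
def nu (k : ℕ) : ℕ := ((Nat.digits 2 k).takeWhile (· == 1)).length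

/-!
Write `k + 1 = 2 ^ a * c` with `c` odd; then `a = nu k`, and the last `a` binary digits of `k`
are all `1`. By Lucas' theorem such digits contribute only odd factors to `C(k, i)`, so `C(k, i)`
has the parity of `C(c - 1, i / 2 ^ a)`. This is `C(c - 1, 0) = 1` for `i < 2 ^ a`, and
the even number `C(c - 1, 1) = c - 1` for `i = 2 ^ a`.
-/

theorem length_takeWhile_digits_eq_padicValNat {b : ℕ} (hb : 1 < b) (n : ℕ) :
    ((b.digits n).takeWhile (· == b - 1)).length = padicValNat b (n + 1) := by
  induction n using Nat.strong_induction_on with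
  | _ n ih =>
    have hlast : n % b = b - 1 ↔ b ∣ n + 1 := Nat.mod_eq_sub_iff one_pos hb.le
    rcases n.eq_zero_or_pos with rfl | hn
    · simp
    rw [Nat.digits_def' hb hn]
    by_cases hdvd : b ∣ n + 1
    · have hsucc : n + 1 = b * (n / b + 1) := by
        rw [← Nat.succ_div_of_dvd hdvd, Nat.mul_div_cancel' hdvd]
      rw [List.takeWhile_cons_of_pos (by simpa using hlast.2 hdvd), List.length_cons,
        ih (n / b) (Nat.div_lt_self hn hb), hsucc, padicValNat_base_mul hb (Nat.succ_ne_zero _)]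
    · rw [List.takeWhile_cons_of_neg (by simpa using mt hlast.1 hdvd), List.length_nil,
        padicValNat.eq_zero_of_not_dvd hdvd]

theorem nu_eq_padicValNat (k : ℕ) : nu k = padicValNat 2 (k + 1) :=
  length_takeWhile_digits_eq_padicValNat one_lt_two k

section Lucas

variable {p n : ℕ}

theorem prime_dvd_choose_iff_dvd_choose_div (hp : p.Prime) (hn : p ∣ n + 1) (i : ℕ) :
    p ∣ n.choose i ↔ p ∣ (n / p).choose (i / p) := by
  have := Fact.mk hp
  have hlast : n % p = p - 1 := (Nat.mod_eq_sub_iff one_pos hp.one_le).2 hn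
  have hcoprime : p.Coprime ((p - 1).choose (i % p)) :=
    hp.coprime_choose_of_lt (Nat.sub_one_lt hp.ne_zero) (Nat.le_sub_one_of_lt (i.mod_lt hp.pos))
  rw [Choose.choose_modEq_choose_mod_mul_choose_div_nat.dvd_iff dvd_rfl, hlast,
    hcoprime.dvd_mul_left]

theorem prime_dvd_choose_iff_dvd_choose_div_pow (hp : p.Prime) {a : ℕ} (hn : p ^ a ∣ n + 1)
    (i : ℕ) : p ∣ n.choose i ↔ p ∣ (n / p ^ a).choose (i / p ^ a) := by
  induction a generalizing n i with
  | zero => simp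
  | succ a ih =>
    have hp_dvd : p ∣ n + 1 := (dvd_pow_self p a.succ_ne_zero).trans hn
    have hdiv : p ^ a ∣ n / p + 1 := by
      rw [← Nat.succ_div_of_dvd hp_dvd, Nat.dvd_div_iff_mul_dvd hp_dvd, ← pow_succ']
      exact hn
    rw [prime_dvd_choose_iff_dvd_choose_div hp hp_dvd, ih hdiv, Nat.div_div_eq_div_mul,
      Nat.div_div_eq_div_mul, pow_succ']

theorem prime_not_dvd_choose_of_lt_pow (hp : p.Prime) {a i : ℕ} (hn : p ^ a ∣ n + 1)
    (hi : i < p ^ a) : ¬p ∣ n.choose i := by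
  rw [prime_dvd_choose_iff_dvd_choose_div_pow hp hn, Nat.div_eq_of_lt hi, Nat.choose_zero_right]
  exact hp.not_dvd_one

theorem prime_dvd_choose_pow_iff (hp : p.Prime) {a : ℕ} (hn : p ^ a ∣ n + 1) :
    p ∣ n.choose (p ^ a) ↔ p ∣ n / p ^ a := by
  rw [prime_dvd_choose_iff_dvd_choose_div_pow hp hn, Nat.div_self (pow_pos hp.pos a),
    Nat.choose_one_right]

end Lucas

theorem even_div_two_pow_padicValNat_succ (n : ℕ) : Even (n / 2 ^ padicValNat 2 (n + 1)) := by
  have hdvd : 2 ^ padicValNat 2 (n + 1) ∣ n + 1 := pow_padicValNat_dvd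
  have hodd : ¬2 ∣ n / 2 ^ padicValNat 2 (n + 1) + 1 := by
    rw [← Nat.succ_div_of_dvd hdvd, Nat.dvd_div_iff_mul_dvd hdvd, ← pow_succ]
    exact pow_succ_padicValNat_not_dvd n.succ_ne_zero
  rwa [← even_iff_two_dvd, Nat.even_add_one, not_not] at hodd

-- There is no bound `i ≤ k`: if row `k` is entirely odd, the least index is `k + 1`,
-- where `C(k, k + 1) = 0`.
theorem isLeast_even_choose (k : ℕ) : IsLeast {i | Even (k.choose i)} (2 ^ nu k) := by
  have hdvd : 2 ^ nu k ∣ k + 1 := nu_eq_padicValNat k ▸ pow_padicValNat_dvd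
  have heven : Even (k / 2 ^ nu k) := nu_eq_padicValNat k ▸ even_div_two_pow_padicValNat_succ k
  refine ⟨?_, fun i hi => ?_⟩
  · exact even_iff_two_dvd.2 ((prime_dvd_choose_pow_iff Nat.prime_two hdvd).2 heven.two_dvd)
  · by_contra! hlt
    exact prime_not_dvd_choose_of_lt_pow Nat.prime_two hdvd hlt (even_iff_two_dvd.1 hi)

theorem two_pow_nu_le_succ (k : ℕ) : 2 ^ nu k ≤ k + 1 :=
  (isLeast_even_choose k).2 (by simp)

/-- The length of the initial run of odd entries in row `k` of
Pascal's triangle equals `2 ^ nu k`: if some entry `C(k,i)` with `i ≤ k` is even,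
then the least such index is `2 ^ nu k`; otherwise `k = 2 ^ nu k - 1`. -/
theorem initial_odd_run_pascal (k : ℕ) :
    ((∃ i, i ≤ k ∧ Even (Nat.choose k i)) →
        IsLeast {i | i ≤ k ∧ Even (Nat.choose k i)} (2 ^ nu k)) ∧
      ((∀ i, i ≤ k → Odd (Nat.choose k i)) → k = 2 ^ nu k - 1) := by
  obtain ⟨heven, hleast⟩ := isLeast_even_choose k
  constructor
  · rintro ⟨i, hik, hi⟩
    exact ⟨⟨(hleast hi).trans hik, heven⟩, fun j hj => hleast hj.2⟩
  · intro hodd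
    have hgt : k < 2 ^ nu k := by
      by_contra! hle
      exact Nat.not_even_iff_odd.2 (hodd _ hle) heven
    have hle := two_pow_nu_le_succ k
    omega
end

section
/- For every sequence δ_m of reals with 0 < δ_m ≤ 1 and δ_m monotonically decreasing to 0, there exists a set E ⊆ ℕ such that ν(k) → ∞ as k → ∞ along E and ρ_m(E) = |E ∩ {1,…,m}|/m ≥ δ_m for all m ≥ 1. -/
open Filter Finset Topology

/-- `B_p(s) = {k : 2^{p-1} ≤ k < 2^p, ν(k) ≥ s}`. -/
def Bset (p s : ℕ) : Finset ℕ := (Finset.Ico (2 ^ (p - 1)) (2 ^ p)).filter (fun k => s ≤ nu k)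

/-!
Let `g` be monotone, tending to infinity, and put `E = {k | g k ≤ ν(k)}`. Then `ν → ∞` along `E`,
and by monotonicity `E` contains, up to `m`, every `k` with `g m ≤ ν(k)`. For fixed `s` the set
`{k | s ≤ ν(k)}` is a residue class modulo `2 ^ s`, hence has positive density and eventually beats
`δ`; it remains to let `g` grow so slowly that `{k | g m ≤ ν(k)}` beats `δ` at `m` for every `m`.
-/

/-- The density `ρ_m(E) = |E ∩ {1, …, m}| / m` of a set of naturals in an initial interval, with
junk value `0` at `m = 0`. -/
noncomputable def initialDensity (E : Set ℕ) (m : ℕ) : ℝ :=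
  ((E ∩ Set.Icc 1 m).ncard : ℝ) / m

theorem initialDensity_univ {m : ℕ} (hm : 1 ≤ m) : initialDensity Set.univ m = 1 := by
  have hcard : (Set.Icc 1 m).ncard = m := by
    rw [← Finset.coe_Icc, Set.ncard_coe_finset, Nat.card_Icc, Nat.add_sub_cancel]
  rw [initialDensity, Set.univ_inter, hcard, div_self (by positivity)]

theorem initialDensity_mono {E F : Set ℕ} {m : ℕ} (h : ∀ k ≤ m, k ∈ E → k ∈ F) :
    initialDensity E m ≤ initialDensity F m := by
  have hsub : E ∩ Set.Icc 1 m ⊆ F ∩ Set.Icc 1 m := fun k hk => ⟨h k hk.2.2 hk.1, hk.2⟩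
  unfold initialDensity
  gcongr
  exact (Set.finite_Icc 1 m).inter_of_right F

theorem abs_ncard_modEq_inter_Icc_sub_div_le_one {r : ℕ} (hr : 0 < r) (v m : ℕ) :
    |(({k | k ≡ v [MOD r]} ∩ Set.Icc 1 m).ncard : ℝ) - m / r| ≤ 1 := by
  have hset : {k | k ≡ v [MOD r]} ∩ Set.Icc 1 m = ↑{k ∈ Ioc 0 m | k ≡ v [MOD r]} := by
    ext k
    simp [Nat.succ_le_iff, and_comm]
  let x : ℚ := (m - v) / r
  let y : ℚ := ((0 : ℕ) - v) / r
  have hyx : ⌊y⌋ ≤ ⌊x⌋ := by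
    dsimp only [x, y]
    gcongr
    exact m.zero_le
  have hcard : (#{k ∈ Ioc 0 m | k ≡ v [MOD r]} : ℤ) = ⌊x⌋ - ⌊y⌋ := by
    rw [Nat.Ioc_filter_modEq_card 0 m hr v, max_eq_left (sub_nonneg.2 hyx)]
  have hdiff : x - y = m / r := by
    dsimp only [x, y]
    rw [Nat.cast_zero]
    ring
  have hbound : |(#{k ∈ Ioc 0 m | k ≡ v [MOD r]} : ℚ) - m / r| ≤ 1 := by
    rw [← Int.cast_natCast, hcard, Int.cast_sub, ← hdiff, abs_le]
    constructor <;>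
      linarith [Int.floor_le x, Int.lt_floor_add_one x, Int.floor_le y, Int.lt_floor_add_one y]
  rw [hset, Set.ncard_coe_finset]
  simpa only [Rat.cast_abs, Rat.cast_sub, Rat.cast_div, Rat.cast_natCast, Rat.cast_one] using
    (Rat.cast_le (K := ℝ)).2 hbound

theorem tendsto_initialDensity_modEq {r : ℕ} (hr : 0 < r) (v : ℕ) :
    Tendsto (initialDensity {k | k ≡ v [MOD r]}) atTop (𝓝 (1 / r)) := by
  have hone_div : Tendsto (fun m : ℕ => (1 : ℝ) / m) atTop (𝓝 0) :=
    tendsto_one_div_atTop_nhds_zero_nat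
  refine tendsto_iff_norm_sub_tendsto_zero.2 <|
    squeeze_zero' (Eventually.of_forall fun _ => norm_nonneg _) ?_ hone_div
  filter_upwards [eventually_gt_atTop 0] with m hm
  have hquot : (1 : ℝ) / r = m / r / m := by field_simp
  rw [initialDensity, hquot, ← sub_div, norm_div, Real.norm_eq_abs, Real.norm_natCast]
  gcongr
  exact abs_ncard_modEq_inter_Icc_sub_div_le_one hr v m

theorem exists_monotone_tendsto_atTop_forall {P : ℕ → ℕ → Prop} (h0 : ∀ m, P 0 m)
    (hP : ∀ s, ∀ᶠ m in atTop, P s m) :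
    ∃ g : ℕ → ℕ, Monotone g ∧ Tendsto g atTop atTop ∧ ∀ m, P (g m) m := by
  classical
  -- `P s m` alone need not persist as `m` grows; quantifying over the tail makes `g` monotone.
  let Q (m s : ℕ) : Prop := ∀ n ≥ m, P s n
  refine ⟨fun m => Nat.findGreatest (Q m) m, ?_, ?_, fun m => ?_⟩
  · intro a b hab
    exact Nat.findGreatest_mono (fun s hs n hn => hs n (hab.trans hn)) hab
  · refine tendsto_atTop.2 fun s => ?_
    filter_upwards [eventually_forall_ge_atTop.2 (hP s), eventually_ge_atTop s] with m hm hsm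
    exact Nat.le_findGreatest hsm hm
  · exact Nat.findGreatest_spec (P := Q m) m.zero_le (fun n _ => h0 n) m le_rfl

theorem exists_tendsto_of_eventually_le_initialDensity {f : ℕ → ℕ} {δ : ℕ → ℝ}
    (hδ1 : ∀ m, 1 ≤ m → δ m ≤ 1)
    (hf : ∀ s, ∀ᶠ m in atTop, δ m ≤ initialDensity {k | s ≤ f k} m) :
    ∃ E : Set ℕ, Tendsto f (atTop ⊓ 𝓟 E) atTop ∧ ∀ m, 1 ≤ m → δ m ≤ initialDensity E m := by
  have h0 : ∀ m, 1 ≤ m → δ m ≤ initialDensity {k | 0 ≤ f k} m := fun m hm => by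
    simpa only [Nat.zero_le, Set.ofPred_true, initialDensity_univ hm] using hδ1 m hm
  obtain ⟨g, hg, hgt, hgδ⟩ := exists_monotone_tendsto_atTop_forall
    (P := fun s m => 1 ≤ m → δ m ≤ initialDensity {k | s ≤ f k} m) h0
    fun s => (hf s).mono fun _ hm _ => hm
  refine ⟨{k | g k ≤ f k}, ?_, fun m hm => ?_⟩
  · have hgf : ∀ᶠ k in atTop ⊓ 𝓟 {k | g k ≤ f k}, g k ≤ f k := mem_inf_of_right fun _ hk => hk
    exact tendsto_atTop_mono' _ hgf (hgt.mono_left inf_le_left)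
  · calc δ m ≤ initialDensity {k | g m ≤ f k} m := hgδ m hm
      _ ≤ initialDensity {k | g k ≤ f k} m :=
        initialDensity_mono fun k hk hgk => (hg hk).trans hgk

theorem nu_two_mul (k : ℕ) : nu (2 * k) = 0 := by
  rcases k.eq_zero_or_pos with rfl | hk
  · simp [nu]
  · simp [nu, Nat.digits_base_mul one_lt_two hk]

theorem nu_two_mul_add_one (k : ℕ) : nu (2 * k + 1) = nu k + 1 := by
  have hdigits : Nat.digits 2 (2 * k + 1) = 1 :: Nat.digits 2 k := by
    rw [add_comm]
    exact Nat.digits_add 2 one_lt_two 1 k one_lt_two (Or.inl one_ne_zero)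
  rw [nu, hdigits, List.takeWhile_cons_of_pos (by rfl), List.length_cons, nu]

theorem le_nu_iff_two_pow_dvd_add_one {s k : ℕ} : s ≤ nu k ↔ 2 ^ s ∣ k + 1 := by
  induction s generalizing k with
  | zero => simp
  | succ s ih =>
    rcases k.even_or_odd' with ⟨j, rfl | rfl⟩
    · have hodd : ¬ 2 ^ (s + 1) ∣ 2 * j + 1 := fun h => by
        have htwo : 2 ∣ 2 * j + 1 := (Dvd.intro_left _ (pow_succ 2 s).symm).trans h
        omega
      simp [nu_two_mul, hodd]
    · have hadd : 2 * j + 1 + 1 = (j + 1) * 2 := by ring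
      rw [nu_two_mul_add_one, Nat.succ_le_succ_iff, ih, hadd, pow_succ,
        Nat.mul_dvd_mul_iff_right two_pos]

theorem le_nu_iff_modEq {s k : ℕ} : s ≤ nu k ↔ k ≡ 2 ^ s - 1 [MOD 2 ^ s] := by
  have hsucc : 2 ^ s - 1 + 1 ≡ 0 [MOD 2 ^ s] := by
    rw [Nat.sub_add_cancel Nat.one_le_two_pow, Nat.modEq_zero_iff_dvd]
  rw [le_nu_iff_two_pow_dvd_add_one, ← Nat.modEq_zero_iff_dvd]
  exact ⟨fun h => (h.trans hsucc.symm).add_right_cancel' 1,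
    fun h => (h.add_right 1).trans hsucc⟩

theorem tendsto_initialDensity_le_nu (s : ℕ) :
    Tendsto (initialDensity {k | s ≤ nu k}) atTop (𝓝 (1 / 2 ^ s)) := by
  simpa only [le_nu_iff_modEq, Nat.cast_pow, Nat.cast_ofNat] using
    tendsto_initialDensity_modEq (Nat.two_pow_pos s) (2 ^ s - 1)

theorem exists_tendsto_nu_with_density_lower_bound_general {δ : ℕ → ℝ}
    (hδ1 : ∀ m, 1 ≤ m → δ m ≤ 1) (hlim : Tendsto δ atTop (𝓝 0)) :
    ∃ E : Set ℕ, Tendsto nu (atTop ⊓ 𝓟 E) atTop ∧ ∀ m, 1 ≤ m → δ m ≤ initialDensity E m :=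
  exists_tendsto_of_eventually_le_initialDensity hδ1 fun s =>
    (hlim.eventually_lt (tendsto_initialDensity_le_nu s) (by positivity)).mono fun _ => le_of_lt

/-- For every sequence `δ_m` with `0 < δ_m ≤ 1` decreasing to `0`,
there is a set `E ⊆ ℕ` with `ν(k) → ∞` along `E` and `ρ_m(E) ≥ δ_m` for all `m ≥ 1`. -/
theorem exists_tendsto_nu_with_density_lower_bound (δ : ℕ → ℝ)
    (hδ0 : ∀ m, 0 < δ m) (hδ1 : ∀ m, δ m ≤ 1) (hmono : Antitone δ)
    (hlim : Tendsto δ atTop (𝓝 0)) :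
    ∃ E : Set ℕ, Tendsto (fun k => nu k) (atTop ⊓ 𝓟 E) atTop ∧
      ∀ m, 1 ≤ m → δ m ≤ ((E ∩ Set.Icc 1 m).ncard : ℝ) / m := by
  exact exists_tendsto_nu_with_density_lower_bound_general (fun m _ => hδ1 m) hlim
end
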